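/- Let n ≥ 1 and let g be a prefix-exchange map with n parts on the Cantor space ℕ → Bool. Then exactly one of the following holds: either g has finite order as a permutation of ℕ → Bool, or there exist a finite binary word u, a nonempty finite binary word s, and an integer b with 1 ≤ b ≤ 2^{n−1} such that g^b(u ++ w) = u ++ s ++ w for every w ∈ 𝔠 (an attracting periodic cycle); in the latter case g has infinite order. -/

import Mathlib

/-- Concatenation of a finite binary word `u` with an infinite sequence `x`
in the Cantor space `ℕ → Bool`. -/
def cat (u : List Bool) (x : ℕ → Bool) : ℕ → Bool :=
  fun i => u.getD i (x (i - u.length))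

/-- A finite family of binary words is a complete prefix code if every point of the
Cantor space has exactly one of the words as a prefix. -/
def IsCompletePrefixCode {m : ℕ} (u : Fin m → List Bool) : Prop :=
  ∀ x : ℕ → Bool, ∃! i : Fin m, ∃ w : ℕ → Bool, x = cat (u i) w

/-- A prefix-exchange map with `n` parts: there are complete prefix codes
`(u_1, …, u_n)` and `(v_1, …, v_n)` and a permutation `σ` of `{1, …, n}` with
`g(u_i ++ w) = v_{σ(i)} ++ w` for all `i` and `w`. -/
def IsPrefixExchange (n : ℕ) (g : (ℕ → Bool) → ℕ → Bool) : Prop :=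
  ∃ u v : Fin n → List Bool, IsCompletePrefixCode u ∧ IsCompletePrefixCode v ∧
    ∃ σ : Equiv.Perm (Fin n),
      ∀ (i : Fin n) (w : ℕ → Bool), g (cat (u i) w) = cat (v (σ i)) w

/-!
Consider the partitions of the Cantor space into the cylinders of the domain words `u i` and of
the range words `v i`. Counting shows that the cylinder of some `u i` is not properly contained in
the cylinder of any `v j`. If `v i` properly extends `u i`, this is an attracting cycle. Otherwise
the two words are equal or have disjoint cylinders, and the first return map of `g` to the
complement of the cylinder of `u i` again exchanges prefixes: it has one part fewer, and its return
times have at most doubled. Iterating, either an attracting cycle turns up after at most `n - 1`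
doublings, or all parts are removed and every point is periodic with a common period.
-/

open Function Set
open scoped Finset

section SetFamilies

variable {α ι : Type*}

theorem exists_forall_not_ssubset {S : Finset ι} {A B : ι → Set α} (hS : S.Nonempty)
    (hB : (S : Set ι).PairwiseDisjoint B) (hB_nonempty : ∀ i ∈ S, (B i).Nonempty)
    (hBA : ⋃ i ∈ S, B i ⊆ ⋃ i ∈ S, A i) : ∃ i ∈ S, ∀ j ∈ S, ¬ A i ⊂ B j := by
  -- Otherwise each `A i` lies properly inside some `B (f i)`; then `f` is onto `S`, hence
  -- injective, and `B (f i)` can only be covered by `A i`.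
  by_contra! hcon
  choose! f hfS hAB using hcon
  have eq_of_mem : ∀ i ∈ S, ∀ j ∈ S, ∀ x ∈ A i, x ∈ B j → f i = j := fun i hi j hj x hxA hxB =>
    hB.elim_set (hfS i hi) hj x ((hAB i hi).subset hxA) hxB
  have exists_mem : ∀ j ∈ S, ∀ x ∈ B j, ∃ i ∈ S, x ∈ A i := fun j hj x hx => by
    simpa using hBA (mem_biUnion hj hx)
  have f_surjOn : SurjOn f S S := fun j hj => by
    obtain ⟨x, hx⟩ := hB_nonempty j hj
    obtain ⟨i, hi, hxi⟩ := exists_mem j hj x hx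
    exact ⟨i, hi, eq_of_mem i hi j hj x hxi hx⟩
  have f_injOn : InjOn f S := Finset.injOn_of_surjOn_of_card_le f hfS f_surjOn le_rfl
  obtain ⟨i, hi⟩ := hS
  refine (hAB i hi).not_subset fun x hx => ?_
  obtain ⟨k, hk, hxk⟩ := exists_mem (f i) (hfS i hi) x hx
  rwa [← f_injOn hk hi (eq_of_mem k hk (f i) (hfS i hi) x hxk hx)]

theorem biUnion_erase_eq_sdiff [DecidableEq ι] {S : Finset ι} {A : ι → Set α} {i : ι}
    (hA : (S : Set ι).PairwiseDisjoint A) (hi : i ∈ S) :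
    ⋃ k ∈ S.erase i, A k = (⋃ k ∈ S, A k) \ A i := by
  have h_union : ((S : Set ι) ∪ {i}).PairwiseDisjoint A := by
    rwa [union_eq_left.2 (singleton_subset_iff.2 hi)]
  simpa [and_comm] using (biUnion_sdiff_biUnion_eq h_union).symm

variable {f : α → α} {s t : Set α} [DecidablePred (· ∈ s)]

theorem injOn_piecewise_id_compl (hf : InjOn f s) (hst : MapsTo f s t) :
    InjOn (s.piecewise f id) tᶜ := by
  intro x hx y hy hxy
  by_cases hxs : x ∈ s <;> by_cases hys : y ∈ s <;> simp only [hxs, hys, not_false_eq_true,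
    piecewise_eq_of_mem, piecewise_eq_of_notMem, id] at hxy
  · exact hf hxs hys hxy
  · exact absurd (hxy ▸ hst hxs) hy
  · exact absurd (hxy ▸ hst hys) hx
  · exact hxy

-- `hfix` covers both the case that `s` and `t` are disjoint and the case that `f` fixes `s`.
theorem image_piecewise_id_sdiff {A : Set α} (hf : InjOn f s) (hst : f '' s = t)
    (hfix : ∀ x ∈ s ∩ t, f x = x) (hsA : s ⊆ A) (htA : t ⊆ A) :
    s.piecewise f id '' (A \ t) = A \ s := by
  have mem_of_apply_mem : ∀ x ∈ s, f x ∈ s → x ∈ t := fun x hx hfx => by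
    have hfxt : f x ∈ t := hst ▸ mem_image_of_mem f hx
    rwa [← hf hfx hx (hfix (f x) ⟨hfx, hfxt⟩)]
  apply Subset.antisymm
  · rintro _ ⟨x, ⟨hxA, hxt⟩, rfl⟩
    by_cases hxs : x ∈ s
    · rw [piecewise_eq_of_mem _ _ _ hxs]
      exact ⟨htA (hst ▸ mem_image_of_mem f hxs), fun hfx => hxt (mem_of_apply_mem x hxs hfx)⟩
    · rw [piecewise_eq_of_notMem _ _ _ hxs]
      exact ⟨hxA, hxs⟩
  · rintro y ⟨hyA, hys⟩
    by_cases hyt : y ∈ t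
    · obtain ⟨x, hxs, rfl⟩ := hst.symm ▸ hyt
      have hxt : x ∉ t := fun hxt => hys (by rwa [hfix x ⟨hxs, hxt⟩])
      exact ⟨x, ⟨hsA hxs, hxt⟩, piecewise_eq_of_mem _ _ _ hxs⟩
    · exact ⟨y, ⟨hyA, hyt⟩, piecewise_eq_of_notMem _ _ _ hys⟩

end SetFamilies

section Cylinders

theorem cat_append (u s : List Bool) (w : ℕ → Bool) : cat (u ++ s) w = cat u (cat s w) := by
  funext i
  rcases lt_or_ge i u.length with hi | hi
  · simp [cat, List.getD_eq_getElem?_getD, hi, List.getElem?_append_left hi]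
  · simp [cat, List.getD_eq_getElem?_getD, List.getElem?_append_right hi,
      List.getElem?_eq_none hi, Nat.sub_sub]

theorem cat_apply_of_lt {u : List Bool} {i : ℕ} (hi : i < u.length) (w : ℕ → Bool) :
    cat u w i = u[i] := by
  simp [cat, List.getD_eq_getElem?_getD, hi]

theorem cat_apply_length_add (u : List Bool) (w : ℕ → Bool) (i : ℕ) :
    cat u w (u.length + i) = w i := by
  simp [cat, List.getD_eq_getElem?_getD]

theorem cat_injective (u : List Bool) : Injective (cat u) := fun w w' h => by
  funext i
  rw [← cat_apply_length_add u w i, h, cat_apply_length_add]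

theorem not_surjective_cat {s : List Bool} (hs : s ≠ []) : ¬ Surjective (cat s) := fun hsurj => by
  have hpos : 0 < s.length := List.length_pos_iff.2 hs
  obtain ⟨w, hw⟩ := hsurj fun _ => !s[0]
  simpa [cat_apply_of_lt hpos] using congrFun hw 0

theorem prefix_of_cat_eq_cat {u v : List Bool} {w w' : ℕ → Bool} (h : cat u w = cat v w')
    (hlen : u.length ≤ v.length) : u <+: v :=
  List.prefix_iff_getElem.2 ⟨hlen, fun i hi => by
    rw [← cat_apply_of_lt hi w, h, cat_apply_of_lt (hi.trans_le hlen)]⟩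

/-- The cylinder of a finite word: the set of sequences having this word as a prefix. -/
def cylinder (u : List Bool) : Set (ℕ → Bool) := range (cat u)

theorem cat_mem_cylinder (u : List Bool) (w : ℕ → Bool) : cat u w ∈ cylinder u :=
  mem_range_self w

theorem image_cylinder {f : (ℕ → Bool) → ℕ → Bool} {a b : List Bool}
    (hab : ∀ w, f (cat a w) = cat b w) : f '' cylinder a = cylinder b :=
  (range_comp f (cat a)).symm.trans (congrArg range (funext hab))

theorem cylinder_append_ssubset (u : List Bool) {s : List Bool} (hs : s ≠ []) :
    cylinder (u ++ s) ⊂ cylinder u := by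
  have cylinder_ssubset : cylinder s ⊂ univ :=
    ssubset_univ_iff.2 fun h => not_surjective_cat hs (range_eq_univ.1 h)
  calc cylinder (u ++ s)
      = cat u '' cylinder s := (image_cylinder fun w => (cat_append u s w).symm).symm
    _ ⊂ cat u '' univ :=
      ((cat_injective u).injOn.image_ssubset_image_iff (subset_univ _) subset_rfl).2
        cylinder_ssubset
    _ = cylinder u := image_univ

theorem prefix_or_disjoint_of_not_ssubset {u v : List Bool} (h : ¬ cylinder u ⊂ cylinder v) :
    u <+: v ∨ Disjoint (cylinder u) (cylinder v) := by
  refine or_iff_not_imp_right.2 fun hdisj => ?_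
  obtain ⟨_, ⟨w, rfl⟩, ⟨w', hw⟩⟩ := not_disjoint_iff.1 hdisj
  rcases le_total u.length v.length with hlen | hlen
  · exact prefix_of_cat_eq_cat hw.symm hlen
  · obtain ⟨s, rfl⟩ := prefix_of_cat_eq_cat hw hlen
    have hs : s = [] := of_not_not fun hs => h (cylinder_append_ssubset v hs)
    simp [hs]

/-- The word obtained from `c` by replacing its prefix `a` by `b`; words that do not have `a` as a
prefix are left unchanged. -/
def replacePrefix (a b c : List Bool) : List Bool :=
  if a <+: c then b ++ c.drop a.length else c

theorem cat_mem_cylinder_iff {a c : List Bool}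
    (hac : a <+: c ∨ Disjoint (cylinder a) (cylinder c)) (w : ℕ → Bool) :
    cat c w ∈ cylinder a ↔ a <+: c := by
  refine ⟨fun hmem => hac.resolve_right fun hdisj => ?_, ?_⟩
  · exact disjoint_left.1 hdisj hmem (cat_mem_cylinder c w)
  · rintro ⟨d, rfl⟩
    exact ⟨cat d w, (cat_append a d w).symm⟩

theorem piecewise_cylinder_cat {f : (ℕ → Bool) → ℕ → Bool} {a b c : List Bool}
    [DecidablePred (· ∈ cylinder a)] (hab : ∀ w, f (cat a w) = cat b w)
    (hac : a <+: c ∨ Disjoint (cylinder a) (cylinder c)) (w : ℕ → Bool) :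
    (cylinder a).piecewise f id (cat c w) = cat (replacePrefix a b c) w := by
  simp only [piecewise, cat_mem_cylinder_iff hac, replacePrefix, id]
  split_ifs with hpre
  · obtain ⟨d, rfl⟩ := hpre
    rw [cat_append, hab, List.drop_left, cat_append]
  · rfl

end Cylinders

section AttractingCycles

variable {g : (ℕ → Bool) → ℕ → Bool} {b : ℕ}

/-- An attracting periodic cycle of `g` with period `b`: the iterate `g^[b]` maps some cylinder into
itself by inserting a nonempty word. -/
def HasAttractingCycle (g : (ℕ → Bool) → ℕ → Bool) (b : ℕ) : Prop :=
  ∃ u s : List Bool, s ≠ [] ∧ ∀ w, g^[b] (cat u w) = cat u (cat s w)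

theorem HasAttractingCycle.iterate_ne_id (h : HasAttractingCycle g b) {m : ℕ} (hm : 0 < m) :
    g^[m] ≠ id := by
  obtain ⟨u, s, hs, hb⟩ := h
  intro hid
  have semiconj : Semiconj (cat u) (cat s) g^[b] := fun w => (hb w).symm
  have cat_iterate : (cat s)^[m] = id := funext fun w => cat_injective u <| by
    rw [(semiconj.iterate_right m).eq, ← iterate_mul, mul_comm, iterate_mul, hid, iterate_id]
    rfl
  refine not_surjective_cat hs (Surjective.of_comp (g := (cat s)^[m - 1]) ?_)
  rw [← iterate_succ', Nat.succ_eq_add_one, Nat.sub_add_cancel hm, cat_iterate]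
  exact surjective_id

end AttractingCycles

section ReturnSystems

variable {ι : Type*} {g : (ℕ → Bool) → ℕ → Bool} {S : Finset ι} {u v : ι → List Bool}
  {t : ι → ℕ} {i : ι}

/-- The cylinders of the words `u i`, for `i ∈ S`, and those of the words `v i` partition the same
set, and `g^[t i]` exchanges the prefix `u i` for `v i`. This presents a return map of `g` to that
set with return times `t`; the definition does not ask for the first return. -/
structure IsReturnSystem (g : (ℕ → Bool) → ℕ → Bool) (S : Finset ι) (u v : ι → List Bool)
    (t : ι → ℕ) : Prop where
  disjoint_domain : (S : Set ι).PairwiseDisjoint fun i => cylinder (u i)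
  disjoint_range : (S : Set ι).PairwiseDisjoint fun i => cylinder (v i)
  biUnion_eq : ⋃ i ∈ S, cylinder (u i) = ⋃ i ∈ S, cylinder (v i)
  time_pos : ∀ i ∈ S, 0 < t i
  iterate_cat : ∀ i ∈ S, ∀ w, g^[t i] (cat (u i) w) = cat (v i) w

namespace IsReturnSystem

theorem exists_prefix_or_disjoint (h : IsReturnSystem g S u v t) (hS : S.Nonempty) :
    ∃ i ∈ S, ∀ j ∈ S, u i <+: v j ∨ Disjoint (cylinder (u i)) (cylinder (v j)) := by
  obtain ⟨i, hi, hroot⟩ := exists_forall_not_ssubset (A := fun i => cylinder (u i)) hS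
    h.disjoint_range (fun _ _ => range_nonempty _) h.biUnion_eq.ge
  exact ⟨i, hi, fun j hj => prefix_or_disjoint_of_not_ssubset (hroot j hj)⟩

theorem hasAttractingCycle_or_iterate_eq (h : IsReturnSystem g S u v t) (hi : i ∈ S)
    (hroot : u i <+: v i ∨ Disjoint (cylinder (u i)) (cylinder (v i))) :
    HasAttractingCycle g (t i) ∨ ∀ x ∈ cylinder (u i) ∩ cylinder (v i), g^[t i] x = x := by
  rcases hroot with ⟨s, hs⟩ | hdisj
  · have iterate_cat : ∀ w, g^[t i] (cat (u i) w) = cat (u i) (cat s w) := fun w => by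
      rw [h.iterate_cat i hi, ← hs, cat_append]
    by_cases hs_nil : s = []
    · right
      rintro _ ⟨⟨w, rfl⟩, -⟩
      rw [h.iterate_cat i hi, ← hs, hs_nil, List.append_nil]
    · exact Or.inl ⟨u i, s, hs_nil, iterate_cat⟩
  · exact Or.inr fun x hx => absurd hx.2 (disjoint_left.1 hdisj hx.1)

theorem image_biUnion_erase [DecidableEq ι] [DecidablePred (· ∈ cylinder (u i))]
    (h : IsReturnSystem g S u v t) (hg : Injective g) (hi : i ∈ S)
    (hfix : ∀ x ∈ cylinder (u i) ∩ cylinder (v i), g^[t i] x = x) :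
    (cylinder (u i)).piecewise g^[t i] id '' ⋃ k ∈ S.erase i, cylinder (v k) =
      ⋃ k ∈ S.erase i, cylinder (u k) := by
  rw [biUnion_erase_eq_sdiff h.disjoint_range hi, biUnion_erase_eq_sdiff h.disjoint_domain hi,
    h.biUnion_eq]
  refine image_piecewise_id_sdiff (hg.iterate (t i)).injOn (image_cylinder (h.iterate_cat i hi))
    hfix (h.biUnion_eq ▸ ?_) ?_
  · exact subset_biUnion_of_mem (u := fun k => cylinder (u k)) hi
  · exact subset_biUnion_of_mem (u := fun k => cylinder (v k)) hi

theorem erase [DecidableEq ι] (h : IsReturnSystem g S u v t) (hg : Injective g) (hi : i ∈ S)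
    (hroot : ∀ j ∈ S, u i <+: v j ∨ Disjoint (cylinder (u i)) (cylinder (v j)))
    (hfix : ∀ x ∈ cylinder (u i) ∩ cylinder (v i), g^[t i] x = x) :
    IsReturnSystem g (S.erase i) u (fun k => replacePrefix (u i) (v i) (v k))
      (fun k => if u i <+: v k then t i + t k else t k) := by
  classical
  have erase_subset : ∀ k ∈ S.erase i, k ∈ S := fun k => Finset.mem_of_mem_erase
  have return_cat : ∀ k ∈ S, ∀ w, (cylinder (u i)).piecewise g^[t i] id (cat (v k) w) =
      cat (replacePrefix (u i) (v i) (v k)) w := fun k hk =>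
    piecewise_cylinder_cat (h.iterate_cat i hi) (hroot k hk)
  have image_return : ∀ k ∈ S, (cylinder (u i)).piecewise g^[t i] id '' cylinder (v k) =
      cylinder (replacePrefix (u i) (v i) (v k)) := fun k hk => image_cylinder (return_cat k hk)
  have return_injOn : InjOn ((cylinder (u i)).piecewise g^[t i] id) (cylinder (v i))ᶜ :=
    injOn_piecewise_id_compl (hg.iterate (t i)).injOn <|
      mapsTo_iff_image_subset.2 (image_cylinder (h.iterate_cat i hi)).subset
  refine
    { disjoint_domain := h.disjoint_domain.subset erase_subset
      disjoint_range := fun k hk l hl hkl => ?_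
      biUnion_eq := ?_
      time_pos := fun k hk => ?_
      iterate_cat := fun k hk w => ?_ }
  · have subset_compl : ∀ k ∈ S.erase i, cylinder (v k) ⊆ (cylinder (v i))ᶜ := fun k hk =>
      (h.disjoint_range (erase_subset k hk) hi (Finset.ne_of_mem_erase hk)).subset_compl_right
    rw [onFun, ← image_return k (erase_subset k hk), ← image_return l (erase_subset l hl)]
    exact (h.disjoint_range (erase_subset k hk) (erase_subset l hl) hkl).image return_injOn
      (subset_compl k hk) (subset_compl l hl)
  · rw [← h.image_biUnion_erase hg hi hfix, image_iUnion₂]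
    exact iUnion₂_congr fun k hk => image_return k (erase_subset k hk)
  · have := h.time_pos k (erase_subset k hk)
    split_ifs <;> omega
  · have hkS := erase_subset k hk
    rw [← return_cat k hkS, piecewise, ← h.iterate_cat k hkS]
    simp only [h.iterate_cat k hkS, cat_mem_cylinder_iff (hroot k hkS)]
    split_ifs
    · rw [iterate_add_apply, h.iterate_cat k hkS]
    · exact h.iterate_cat k hkS w

theorem isPeriodicPt_of_erase [DecidableEq ι] (h : IsReturnSystem g S u v t) (hg : Injective g)
    (hi : i ∈ S) (hfix : ∀ x ∈ cylinder (u i) ∩ cylinder (v i), g^[t i] x = x) {m : ℕ}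
    (hper : ∀ x ∈ ⋃ k ∈ S.erase i, cylinder (u k), IsPeriodicPt g m x) :
    ∀ x ∈ ⋃ k ∈ S, cylinder (u k), IsPeriodicPt g (m * t i) x := by
  rw [biUnion_erase_eq_sdiff h.disjoint_domain hi] at hper
  intro x hx
  by_cases hxi : x ∈ cylinder (u i)
  · have image_mem : g^[t i] x ∈ cylinder (v i) :=
      image_cylinder (h.iterate_cat i hi) ▸ mem_image_of_mem _ hxi
    by_cases hreturn : g^[t i] x ∈ cylinder (u i)
    · exact IsPeriodicPt.const_mul (hg.iterate (t i) (hfix _ ⟨hreturn, image_mem⟩)) m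
    · have image_periodic : IsPeriodicPt g m (g^[t i] x) :=
        hper _ ⟨h.biUnion_eq ▸ mem_biUnion hi image_mem, hreturn⟩
      refine IsPeriodicPt.mul_const (hg.iterate (t i) ?_) (t i)
      rwa [← iterate_add_apply, add_comm, iterate_add_apply]
  · exact (hper x ⟨hx, hxi⟩).mul_const (t i)

-- The factor `2` on the left avoids the exponent `#S - 1`, which is truncated for empty `S`.
theorem hasAttractingCycle_or_isPeriodicPt (h : IsReturnSystem g S u v t) (hg : Injective g)
    {T : ℕ} (hT : ∀ i ∈ S, t i ≤ T) :
    (∃ b, 0 < b ∧ 2 * b ≤ T * 2 ^ #S ∧ HasAttractingCycle g b) ∨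
      ∃ m, 0 < m ∧ ∀ x ∈ ⋃ i ∈ S, cylinder (u i), IsPeriodicPt g m x := by
  classical
  induction S using Finset.strongInduction generalizing v t T with
  | H S ih =>
    rcases S.eq_empty_or_nonempty with rfl | hS
    · exact Or.inr ⟨1, one_pos, by simp⟩
    obtain ⟨i, hi, hroot⟩ := h.exists_prefix_or_disjoint hS
    have two_pow_card : 2 ^ #S = 2 * 2 ^ #(S.erase i) := by
      rw [← Finset.card_erase_add_one hi, pow_succ']
    rcases h.hasAttractingCycle_or_iterate_eq hi (hroot i hi) with hcycle | hfix
    · refine Or.inl ⟨t i, h.time_pos i hi, ?_, hcycle⟩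
      rw [two_pow_card, mul_left_comm]
      exact Nat.mul_le_mul_left 2 ((hT i hi).trans (Nat.le_mul_of_pos_right T (by positivity)))
    have return_time_le : ∀ k ∈ S.erase i, (if u i <+: v k then t i + t k else t k) ≤ 2 * T :=
      fun k hk => by
        have := hT i hi
        have := hT k (Finset.mem_of_mem_erase hk)
        split_ifs <;> omega
    rcases ih _ (Finset.erase_ssubset hi) (h.erase hg hi hroot hfix) return_time_le with
      ⟨b, hb_pos, hb_le, hcycle⟩ | ⟨m, hm_pos, hper⟩
    · refine Or.inl ⟨b, hb_pos, ?_, hcycle⟩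
      rwa [two_pow_card, ← mul_assoc, mul_comm T]
    · exact Or.inr ⟨m * t i, Nat.mul_pos hm_pos (h.time_pos i hi),
        h.isPeriodicPt_of_erase hg hi hfix hper⟩

end IsReturnSystem

end ReturnSystems

section PrefixExchanges

variable {n : ℕ} {g : (ℕ → Bool) → ℕ → Bool}

theorem IsCompletePrefixCode.pairwise_disjoint_cylinder {u : Fin n → List Bool}
    (hu : IsCompletePrefixCode u) : Pairwise (Disjoint on fun i => cylinder (u i)) := by
  intro i j hij
  refine disjoint_left.2 ?_
  rintro x ⟨w, hw⟩ ⟨w', hw'⟩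
  exact hij ((hu x).unique ⟨w, hw.symm⟩ ⟨w', hw'.symm⟩)

theorem IsCompletePrefixCode.iUnion_cylinder {u : Fin n → List Bool}
    (hu : IsCompletePrefixCode u) : ⋃ i, cylinder (u i) = univ :=
  iUnion_eq_univ_iff.2 fun x => (hu x).exists.imp fun _ ⟨w, hw⟩ => ⟨w, hw.symm⟩

theorem IsCompletePrefixCode.comp_perm {u : Fin n → List Bool} (hu : IsCompletePrefixCode u)
    (σ : Equiv.Perm (Fin n)) : IsCompletePrefixCode (u ∘ σ) := fun x =>
  (σ.bijective.existsUnique_iff).1 (hu x)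

theorem IsPrefixExchange.injective (hg : IsPrefixExchange n g) : Injective g := by
  obtain ⟨u, v, hu, hv, σ, hσ⟩ := hg
  intro x y hxy
  obtain ⟨i, w, rfl⟩ := (hu x).exists
  obtain ⟨j, w', rfl⟩ := (hu y).exists
  rw [hσ, hσ] at hxy
  obtain rfl : i = j := (hv.comp_perm σ _).unique ⟨w, rfl⟩ ⟨w', hxy⟩
  rw [cat_injective _ hxy]

theorem IsPrefixExchange.exists_isReturnSystem (hg : IsPrefixExchange n g) :
    ∃ u v : Fin n → List Bool,
      IsReturnSystem g Finset.univ u v (fun _ => 1) ∧ ⋃ i, cylinder (u i) = univ := by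
  obtain ⟨u, v, hu, hv, σ, hσ⟩ := hg
  have hvσ := hv.comp_perm σ
  refine ⟨u, v ∘ σ,
    { disjoint_domain := hu.pairwise_disjoint_cylinder.set_pairwise _
      disjoint_range := hvσ.pairwise_disjoint_cylinder.set_pairwise _
      biUnion_eq := ?_
      time_pos := fun _ _ => one_pos
      iterate_cat := fun i _ => hσ i }, hu.iUnion_cylinder⟩
  simp only [Finset.mem_univ, iUnion_true, hu.iUnion_cylinder, hvσ.iUnion_cylinder]

theorem IsPrefixExchange.finite_order_or_hasAttractingCycle (hg : IsPrefixExchange n g) :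
    (∃ m, 0 < m ∧ g^[m] = id) ∨ ∃ b, 0 < b ∧ 2 * b ≤ 2 ^ n ∧ HasAttractingCycle g b := by
  obtain ⟨u, v, hsystem, hcover⟩ := hg.exists_isReturnSystem
  rcases hsystem.hasAttractingCycle_or_isPeriodicPt hg.injective (fun _ _ => le_rfl) with
    hcycle | ⟨m, hm, hper⟩
  · right
    simpa only [one_mul, Finset.card_univ, Fintype.card_fin] using hcycle
  · simp only [Finset.mem_univ, iUnion_true, hcover] at hper
    exact Or.inl ⟨m, hm, funext fun x => hper x (mem_univ x)⟩

end PrefixExchanges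

/-- For a prefix-exchange map `g` with `n ≥ 1` parts, exactly one of the following holds:
either `g` has finite order, or some iterate `g^b` with `1 ≤ b ≤ 2^(n-1)` maps a
cylinder strictly inside itself by inserting a nonempty word (an attracting periodic
cycle); in the latter case `g` has infinite order. -/
theorem finite_order_or_attracting_cycle
    (n : ℕ) (hn : 1 ≤ n) (g : (ℕ → Bool) → ℕ → Bool)
    (hpe : IsPrefixExchange n g) :
    Xor' (∃ m, 0 < m ∧ g^[m] = id)
      (∃ u s : List Bool, s ≠ [] ∧ ∃ b, 1 ≤ b ∧ b ≤ 2 ^ (n - 1) ∧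
        ∀ w : ℕ → Bool, g^[b] (cat u w) = cat u (cat s w)) := by
  refine (xor_iff_or_and_not_and _ _).2 ⟨?_, ?_⟩
  · refine hpe.finite_order_or_hasAttractingCycle.imp_right ?_
    rintro ⟨b, hb_pos, hb_le, u, s, hs, hb⟩
    rw [← Nat.sub_add_cancel hn, pow_succ'] at hb_le
    exact ⟨u, s, hs, b, hb_pos, Nat.le_of_mul_le_mul_left hb_le two_pos, hb⟩
  · rintro ⟨⟨m, hm, hid⟩, u, s, hs, b, -, -, hb⟩
    exact HasAttractingCycle.iterate_ne_id ⟨u, s, hs, hb⟩ hm hid
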